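/- Let A ⊆ ℕ be a maximal c.e. set. Then (E_A)⁺ is self-full: every total computable function f : ℕ → ℕ that is a computable reduction from (E_A)⁺ to (E_A)⁺ has range meeting every (E_A)⁺-equivalence class, i.e., for every e there exists e' with f(e') (E_A)⁺ e. -/

import Mathlib

/-- The `e`-th partial computable function. -/
def phi (e : ℕ) : ℕ →. ℕ :=
  Nat.Partrec.Code.eval (Denumerable.ofNat Nat.Partrec.Code e)

/-- `W_e`, the `e`-th c.e. set: the domain of `φ_e`. -/
def WSet (e : ℕ) : Set ℕ := (phi e).Dom

/-- The `E`-equivalence class of `k`. -/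
def classOf (E : ℕ → ℕ → Prop) (k : ℕ) : Set ℕ := {x | E k x}

/-- Computable reducibility of binary relations on ℕ. -/
def Reduces (E F : ℕ → ℕ → Prop) : Prop :=
  ∃ f : ℕ → ℕ, Computable f ∧ ∀ m n, E m n ↔ F (f m) (f n)

/-- The computable FS-jump of `E`: `e E⁺ e'` iff the set of `E`-classes of elements
of `ran φ_e` equals the set of `E`-classes of elements of `ran φ_{e'}`. -/
def FSJump (E : ℕ → ℕ → Prop) : ℕ → ℕ → Prop :=
  fun e e' => classOf E '' (phi e).ran = classOf E '' (phi e').ran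

/-- A set is c.e. if it is `W_e` for some `e`. -/
def CeSet (S : Set ℕ) : Prop := ∃ e : ℕ, S = WSet e

/-- `E_A`: `m E_A n` iff `m = n` or both `m, n ∈ A`. -/
def EA (A : Set ℕ) : ℕ → ℕ → Prop :=
  fun m n => m = n ∨ (m ∈ A ∧ n ∈ A)

/-- A c.e. set `A` is maximal if its complement is infinite and for every c.e. `W`,
either `W \ A` or `Wᶜ \ A` is finite. -/
def MaximalSet (A : Set ℕ) : Prop :=
  CeSet A ∧ Aᶜ.Infinite ∧ ∀ W : Set ℕ, CeSet W → (W \ A).Finite ∨ (Wᶜ \ A).Finite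

/-!
A reduction `f` of `(E_A)⁺` to itself induces an injective operator `Φ` on `E_A`-saturated c.e. sets
that maps uniformly c.e. families to uniformly c.e. families. By the argument of Myhill–Shepherdson,
such an operator is monotone and continuous along increasing uniformly c.e. unions: otherwise it
would enumerate the programs that do not halt.

Maximality of `A` says that each c.e. predicate holds for almost all or for almost no elements of
the complement of `A`. It follows that a computable map tending to infinity within the complement
of `A` is almost everywhere the identity there, and then that for almost every `z ∉ A`, every `X`
satisfies `z ∈ Φ X ↔ z ∈ X`. The saturated sets with a prescribed trace on these
`z` are finite in number, so `Φ` permutes them, and is therefore surjective.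
-/

open Filter Set
open Nat.Partrec (Code)

section Computability

variable {α β : Type*} [Primcodable α] [Primcodable β] {P Q : α → Prop}

theorem rePred_comp {P : β → Prop} (hP : REPred P) {g : α → β} (hg : Computable g) :
    REPred fun a => P (g a) :=
  Partrec.comp hP hg

theorem rePred_iff_exists_computable :
    REPred P ↔ ∃ R : α → ℕ → Bool, Computable₂ R ∧ ∀ a, P a ↔ ∃ n, R a n = true := by
  constructor
  · intro hP
    obtain ⟨c, hc⟩ := Code.exists_code.1 hP
    refine ⟨fun a n => (c.evaln n (Encodable.encode a)).isSome, ?_, fun a => ?_⟩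
    · exact Primrec.option_isSome.to_comp.comp <| Code.primrec_evaln.to_comp.comp <|
        (Computable.snd.pair (Computable.const c)).pair (Computable.encode.comp Computable.fst)
    · have hdom : P a ↔ (c.eval (Encodable.encode a)).Dom := by simp [hc, Part.dom_iff_mem]
      rw [hdom, Code.eval_eq_rfindOpt, Nat.rfindOpt_dom]
      simp only [Option.isSome_iff_exists, Option.mem_def]
  · rintro ⟨R, hR, hPR⟩
    refine (Partrec.rfind hR.partrec₂).dom_re.of_eq fun a => ?_
    rw [hPR, Nat.rfind_dom]
    simp

theorem rePred_and (hP : REPred P) (hQ : REPred Q) : REPred fun a => P a ∧ Q a :=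
  (Partrec.bind hP (Partrec.comp hQ Computable.fst).to₂).dom_re.of_eq fun a => by
    simp [Part.dom_iff_mem]

theorem rePred_or (hP : REPred P) (hQ : REPred Q) : REPred fun a => P a ∨ Q a := by
  obtain ⟨k, hk, hkPQ⟩ := Partrec.merge' hP hQ
  exact hk.dom_re.of_eq fun a => by simpa [Part.assert] using (hkPQ a).2

theorem exists_computable_search {T : α × ℕ → Prop} (hT : REPred T) :
    ∃ S : α → ℕ → Bool, Computable₂ S ∧ (∀ a, (∃ x, T (a, x)) → ∃ n, S a n = true) ∧
      ∀ a n, S a n = true → T (a, n.unpair.1) := by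
  obtain ⟨R, hR, hTR⟩ := rePred_iff_exists_computable.1 hT
  refine ⟨fun a n => R (a, n.unpair.1) n.unpair.2, ?_, ?_, fun a n hn => (hTR _).2 ⟨_, hn⟩⟩
  · have hunpair : Computable fun b : α × ℕ => b.2.unpair := Computable.unpair.comp Computable.snd
    exact hR.comp (Computable.fst.pair (Computable.fst.comp hunpair)) (Computable.snd.comp hunpair)
  · rintro a ⟨x, hx⟩
    obtain ⟨k, hk⟩ := (hTR _).1 hx
    exact ⟨Nat.pair x k, by simpa using hk⟩

theorem rePred_exists {T : α × ℕ → Prop} (hT : REPred T) : REPred fun a => ∃ n, T (a, n) := by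
  obtain ⟨S, hS, hS_of_T, hT_of_S⟩ := exists_computable_search hT
  exact rePred_iff_exists_computable.2
    ⟨S, hS, fun a => ⟨hS_of_T a, fun ⟨n, hn⟩ => ⟨_, hT_of_S a n hn⟩⟩⟩

theorem exists_computable_choice {T : α × ℕ → Prop} (hT : REPred T) (hex : ∀ a, ∃ x, T (a, x)) :
    ∃ p : α → ℕ, Computable p ∧ ∀ a, T (a, p a) := by
  obtain ⟨S, hS, hS_of_T, hT_of_S⟩ := exists_computable_search hT
  have hfind : ∀ a, ∃ n, S a n = true := fun a => hS_of_T a (hex a)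
  refine ⟨fun a => (Nat.find (hfind a)).unpair.1, ?_,
    fun a => hT_of_S a _ (Nat.find_spec (hfind a))⟩
  exact Computable.fst.comp <| Computable.unpair.comp <|
    Computable.find (ComputablePred.computable_iff.2 ⟨_, hS, rfl⟩) hfind

theorem rePred_lt {f g : α → ℕ} (hf : Computable f) (hg : Computable g) :
    REPred fun a => f a < g a :=
  rePred_comp (PrimrecPred.computablePred Primrec.nat_lt).to_re (hf.pair hg)

theorem rePred_eq {f g : α → β} (hf : Computable f) (hg : Computable g) :
    REPred fun a => f a = g a := by
  classical
  exact rePred_comp (PrimrecPred.computablePred Primrec.eq).to_re (hf.pair hg)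

theorem rePred_ne {f g : α → β} (hf : Computable f) (hg : Computable g) :
    REPred fun a => f a ≠ g a := by
  classical
  exact rePred_comp (PrimrecPred.computablePred Primrec.eq).not.to_re (hf.pair hg)

theorem computable_iterate {q : α → α} (hq : Computable q) (a : α) :
    Computable fun n => q^[n] a := by
  refine (Computable.nat_rec Computable.id (Computable.const a)
    (hq.comp (Computable.snd.comp Computable.snd)).to₂).of_eq fun n => ?_
  induction n with
  | zero => rfl
  | succ n ih => rw [Function.iterate_succ_apply', ← ih]; rfl

theorem computable_partialSups {p : ℕ → ℕ} (hp : Computable p) : Computable (partialSups p) := by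
  have hstep : Computable₂ fun (_ : ℕ) (a : ℕ × ℕ) => max a.2 (p (a.1 + 1)) :=
    Primrec.nat_max.to_comp.comp (Computable.snd.comp Computable.snd)
      (hp.comp (Computable.succ.comp (Computable.fst.comp Computable.snd)))
  refine (Computable.nat_rec Computable.id (Computable.const (p 0)) hstep).of_eq fun n => ?_
  induction n with
  | zero => simp
  | succ n ih => rw [partialSups_add_one, ← ih]; rfl

end Computability

theorem rePred_mem_ran_phi : REPred fun a : ℕ × ℕ => a.2 ∈ (phi a.1).ran := by
  have hevaln : REPred fun a : ((ℕ × ℕ) × ℕ) × ℕ =>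
      (Denumerable.ofNat Code a.1.1.1).evaln a.2 a.1.2 = some a.1.1.2 := by
    refine rePred_eq (Code.primrec_evaln.to_comp.comp
      ((Computable.snd.pair ((Computable.ofNat Code).comp ?_)).pair
        (Computable.snd.comp Computable.fst))) (Computable.option_some.comp ?_)
    · exact Computable.fst.comp (Computable.fst.comp Computable.fst)
    · exact Computable.snd.comp (Computable.fst.comp Computable.fst)
  refine (rePred_exists (rePred_exists hevaln)).of_eq fun a => ?_
  simp only [PFun.ran, mem_ofPred_eq, phi, Code.evaln_complete, Option.mem_def]

theorem exists_computable_ran_phi_eq {α : Type*} [Primcodable α] {P : α × ℕ → Prop}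
    (hP : REPred P) : ∃ g : α → ℕ, Computable g ∧ ∀ a, (phi (g a)).ran = {y | P (a, y)} := by
  obtain ⟨c, hc⟩ := Code.exists_code.1 (hP.map (Computable.snd.comp Computable.fst).to₂)
  refine ⟨fun a => Encodable.encode (c.curry (Encodable.encode a)), ?_, fun a => ?_⟩
  · exact Computable.encode.comp
      (Code.primrec₂_curry.to_comp.comp (Computable.const c) Computable.encode)
  · ext y
    simp [phi, PFun.ran, hc]

theorem ceSet_iff_rePred {S : Set ℕ} : CeSet S ↔ REPred (· ∈ S) := by
  constructor
  · rintro ⟨e, rfl⟩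
    exact (Code.eval_part.comp (Computable.const (Denumerable.ofNat Code e)) Computable.id).dom_re
  · intro hS
    obtain ⟨c, hc⟩ := Code.exists_code.1 (Partrec.nat_iff.1 (hS.map (Computable.const 0).to₂))
    refine ⟨Encodable.encode c, ?_⟩
    ext y
    simp [WSet, phi, hc, Part.assert]

/-- The filter of sets containing almost every element of the complement of `A`. If `A` is maximal,
it behaves like an ultrafilter on c.e. predicates (`MaximalSet.eventually_or_eventually_not`). -/
abbrev atTopOff (A : Set ℕ) : Filter ℕ := atTop ⊓ 𝓟 Aᶜ

section Maximal

variable {A : Set ℕ} {p : ℕ → ℕ}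

theorem eventually_atTopOff {P : ℕ → Prop} :
    (∀ᶠ y in atTopOff A, P y) ↔ ∃ N, ∀ y ≥ N, y ∉ A → P y := by
  simp only [eventually_inf_principal, eventually_atTop, mem_compl_iff]

theorem eventually_atTopOff_iff_finite {P : ℕ → Prop} :
    (∀ᶠ y in atTopOff A, P y) ↔ {y | y ∉ A ∧ ¬P y}.Finite := by
  rw [eventually_inf_principal, ← Nat.cofinite_eq_atTop, eventually_cofinite]
  simp only [mem_compl_iff, not_forall, exists_prop]

theorem eventually_atTopOff_notMem : ∀ᶠ y in atTopOff A, y ∉ A :=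
  mem_inf_of_right (mem_principal_self _)

theorem eventually_atTopOff_ne (x : ℕ) : ∀ᶠ y in atTopOff A, y ≠ x :=
  (eventually_ne_atTop x).filter_mono inf_le_left

/-- The parity of the length of the longest descending run `n > p n > p (p n) > ⋯`. -/
def descentParity (p : ℕ → ℕ) (n : ℕ) : Bool :=
  if p n < n then !descentParity p (p n) else false

theorem descentParity_of_lt {n : ℕ} (hn : p n < n) :
    descentParity p n = !descentParity p (p n) := by
  rw [descentParity, if_pos hn]

theorem computable_descentParity (hp : Computable p) : Computable (descentParity p) := by
  let step : Unit → List Bool → Option Bool := fun _ l =>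
    some (cond (decide (p l.length < l.length)) (!l.getD (p l.length) false) false)
  have hlength : Computable fun a : Unit × List Bool => a.2.length :=
    Computable.list_length.comp Computable.snd
  have hstep : Computable₂ step :=
    Computable.option_some.comp <| Computable.cond
      (Primrec.nat_lt.decide.to_comp.comp (hp.comp hlength) hlength)
      (Primrec.not.to_comp.comp
        ((Primrec.list_getD false).to_comp.comp Computable.snd (hp.comp hlength)))
      (Computable.const false)
  have hrec := Computable.nat_strong_rec (fun _ : Unit => descentParity p) hstep fun _ n => by
    by_cases hn : p n < n
    · simp [step, hn, descentParity_of_lt hn]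
    · simp [step, hn, descentParity]
  exact hrec.comp (Computable.const ()) Computable.id

namespace MaximalSet

theorem rePred (hA : MaximalSet A) : REPred (· ∈ A) :=
  ceSet_iff_rePred.1 hA.1

theorem atTopOff_neBot (hA : MaximalSet A) : (atTopOff A).NeBot := by
  rw [atTopOff, ← Nat.cofinite_eq_atTop]
  exact hA.2.1.cofinite_inf_principal_neBot

theorem eventually_or_eventually_not (hA : MaximalSet A) {P : ℕ → Prop} (hP : REPred P) :
    (∀ᶠ y in atTopOff A, P y) ∨ ∀ᶠ y in atTopOff A, ¬P y := by
  have hfin := hA.2.2 {y | P y} (ceSet_iff_rePred.2 hP)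
  simp only [eventually_atTopOff_iff_finite, not_not]
  exact hfin.symm.imp (·.subset fun y hy => hy.symm) (·.subset fun y hy => hy.symm)

theorem exists_computable_eventually (hA : MaximalSet A) {T : ℕ × ℕ → Prop} (hT : REPred T)
    (hex : ∀ᶠ y in atTopOff A, ∃ x, T (y, x)) :
    ∃ p : ℕ → ℕ, Computable p ∧ ∀ᶠ y in atTopOff A, T (y, p y) := by
  obtain ⟨N, hN⟩ := eventually_atTopOff.1 hex
  have hT' : REPred fun a : ℕ × ℕ => T a ∨ a.1 ∈ A ∨ a.1 < N :=
    rePred_or hT (rePred_or (rePred_comp hA.rePred Computable.fst)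
      (rePred_lt Computable.fst (Computable.const N)))
  obtain ⟨p, hp, hpT⟩ := exists_computable_choice hT' fun y => by
    by_cases hy : y ∈ A ∨ y < N
    · exact ⟨0, .inr hy⟩
    · rw [not_or, not_lt] at hy
      exact (hN y hy.2 hy.1).imp fun _ => .inl
  refine ⟨p, hp, eventually_atTopOff.2 ⟨N, fun y hyN hyA => ?_⟩⟩
  exact (hpT y).resolve_right (by simp [hyA, hyN])

theorem not_tendsto_of_eventually_lt (hA : MaximalSet A) (hp : Computable p)
    (hlt : ∀ᶠ y in atTopOff A, p y < y) : ¬Tendsto p (atTopOff A) (atTopOff A) := by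
  intro htendsto
  have := hA.atTopOff_neBot
  have hparity : ∃ b, ∀ᶠ y in atTopOff A, descentParity p y = b := by
    rcases hA.eventually_or_eventually_not
      (rePred_eq (computable_descentParity hp) (Computable.const true)) with h | h
    · exact ⟨true, h⟩
    · exact ⟨false, h.mono fun y hy => Bool.eq_false_of_not_eq_true hy⟩
  obtain ⟨b, hb⟩ := hparity
  obtain ⟨y, hy, hpy, hlt⟩ := (hb.and ((htendsto.eventually hb).and hlt)).exists
  rw [descentParity_of_lt hlt, hpy] at hy
  simp at hy

theorem exists_Ico_subset_of_strictMono (hA : MaximalSet A) {h : ℕ → ℕ} (hh : Computable h)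
    (hmono : StrictMono h) : ∃ n, Ico (h n) (h (n + 1)) ⊆ A := by
  -- Otherwise the union of the even-numbered intervals splits `Aᶜ` into two infinite parts.
  by_contra! hmeets
  simp only [not_subset, mem_Ico] at hmeets
  have hdouble : Computable fun a : ℕ × ℕ => 2 * a.2 :=
    Primrec.nat_mul.to_comp.comp (Computable.const 2) Computable.snd
  have heven : REPred fun z => ∃ n, h (2 * n) ≤ z ∧ z < h (2 * n + 1) :=
    rePred_exists <| rePred_and
      ((rePred_lt (hh.comp hdouble) (Computable.succ.comp Computable.fst)).of_eq
        fun a => Nat.lt_succ_iff)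
      (rePred_lt Computable.fst (hh.comp (Computable.succ.comp hdouble)))
  rcases hA.eventually_or_eventually_not heven with hev | hev <;>
    obtain ⟨N, hN⟩ := eventually_atTopOff.1 hev
  · obtain ⟨z, ⟨hz, hz'⟩, hzA⟩ := hmeets (2 * N + 1)
    obtain ⟨n, hn, hn'⟩ := hN z (by have := hmono.le_apply (x := 2 * N + 1); omega) hzA
    have := hmono.lt_iff_lt.1 (hn.trans_lt hz')
    have := hmono.lt_iff_lt.1 (hz.trans_lt hn')
    omega
  · obtain ⟨z, hz, hzA⟩ := hmeets (2 * N)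
    exact hN z (by have := hmono.le_apply (x := 2 * N); omega) hzA ⟨N, hz⟩

theorem exists_Icc_subset (hA : MaximalSet A) {g : ℕ → ℕ} (hg : Computable g) (c : ℕ) :
    ∃ n ≥ c, Icc n (g n) ⊆ A := by
  let q : ℕ → ℕ := fun n => n + g n + 1
  have hq : Computable q :=
    Computable.succ.comp (Primrec.nat_add.to_comp.comp Computable.id hg)
  have hmono : StrictMono fun n => q^[n] c := strictMono_nat_of_lt_succ fun n => by
    rw [Function.iterate_succ_apply']
    simp only [q]
    omega
  obtain ⟨n, hn⟩ := hA.exists_Ico_subset_of_strictMono (computable_iterate hq c) hmono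
  refine ⟨q^[n] c, hmono.monotone (Nat.zero_le n), fun z hz => hn ⟨hz.1, ?_⟩⟩
  rw [Function.iterate_succ_apply']
  simp only [mem_Icc, q] at hz ⊢
  omega

theorem not_eventually_gt (hA : MaximalSet A) (hp : Computable p)
    (hpA : ∀ᶠ y in atTopOff A, p y ∉ A) : ¬∀ᶠ y in atTopOff A, y < p y := by
  intro hgt
  have := hA.atTopOff_neBot
  obtain ⟨N, hN⟩ := eventually_atTopOff.1 (hgt.and hpA)
  obtain ⟨c, hcA, hcN⟩ : ∃ c ∉ A, N ≤ c :=
    (eventually_atTopOff_notMem.and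
      ((eventually_ge_atTop N).filter_mono inf_le_left)).exists
  have hmeets : ∀ M ≥ c, ∃ z ∉ A, M ≤ z ∧ z ≤ M + partialSups p M := fun M hM => by
    induction M, hM using Nat.le_induction with
    | base => exact ⟨c, hcA, by omega, by omega⟩
    | succ M hM ih =>
      obtain ⟨z, hzA, hMz, hz⟩ := ih
      have hsups : partialSups p M ≤ partialSups p (M + 1) := (partialSups p).mono M.le_succ
      rcases hMz.eq_or_lt with rfl | hMz
      · obtain ⟨hlt, hpA⟩ := hN M (by omega) hzA
        have hpM : p M ≤ partialSups p M := le_partialSups p M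
        exact ⟨p M, hpA, by omega, by omega⟩
      · exact ⟨z, hzA, by omega, by omega⟩
  have hbound : Computable fun M => M + partialSups p M :=
    Primrec.nat_add.to_comp.comp Computable.id (computable_partialSups hp)
  obtain ⟨M, hM, hsub⟩ := hA.exists_Icc_subset hbound c
  obtain ⟨z, hzA, hz⟩ := hmeets M hM
  exact hzA (hsub hz)

theorem eventually_apply_eq_self (hA : MaximalSet A) (hp : Computable p)
    (htendsto : Tendsto p (atTopOff A) (atTopOff A)) : ∀ᶠ y in atTopOff A, p y = y := by
  have hlt := (hA.eventually_or_eventually_not (rePred_lt hp Computable.id)).resolve_left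
    fun hlt => hA.not_tendsto_of_eventually_lt hp hlt htendsto
  have hgt := (hA.eventually_or_eventually_not (rePred_lt Computable.id hp)).resolve_left
    (hA.not_eventually_gt hp (htendsto.eventually eventually_atTopOff_notMem))
  filter_upwards [hlt, hgt] with y hlt hgt
  exact le_antisymm (not_lt.1 hgt) (not_lt.1 hlt)

end MaximalSet

end Maximal

/-- A ceer: a computably enumerable equivalence relation on `ℕ`. -/
structure IsCeer (E : ℕ → ℕ → Prop) : Prop where
  equivalence : Equivalence E
  rePred : REPred fun a : ℕ × ℕ => E a.1 a.2

/-- The `E`-saturated c.e. sets. For a ceer `E` they represent the `E⁺`-classes: the class of `e`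
corresponds to the `E`-saturation of `ran φ_e` (`IsCeer.fsJump_iff`). -/
structure CeSat (E : ℕ → ℕ → Prop) where
  carrier : Set ℕ
  rePred : REPred (· ∈ carrier)
  saturated : ∀ {x y}, E x y → x ∈ carrier → y ∈ carrier

section CeSat

variable {α : Type*} [Primcodable α] {E F : ℕ → ℕ → Prop}

instance : SetLike (CeSat E) ℕ where
  coe := CeSat.carrier
  coe_injective X Y h := by cases X; cases Y; congr

instance : PartialOrder (CeSat E) := .ofSetLike (CeSat E) ℕ

@[ext]
theorem CeSat.ext {X Y : CeSat E} (h : ∀ z, z ∈ X ↔ z ∈ Y) : X = Y :=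
  SetLike.ext h

instance : OrderTop (CeSat E) where
  top := ⟨univ, (rePred_eq Computable.id Computable.id).of_eq fun _ => by simp, fun _ _ => trivial⟩
  le_top _ _ _ := trivial

/-- Uniform computable enumerability of a family of saturated sets. -/
def UniformlyCe (X : α → CeSat E) : Prop :=
  REPred fun a : α × ℕ => a.2 ∈ X a.1

theorem exists_uniformlyCe_mem_iff {P : α × ℕ → Prop} (hP : REPred P)
    (hsat : ∀ a {x y}, E x y → P (a, x) → P (a, y)) :
    ∃ X : α → CeSat E, UniformlyCe X ∧ ∀ a y, y ∈ X a ↔ P (a, y) :=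
  ⟨fun a => ⟨{y | P (a, y)}, rePred_comp hP ((Computable.const a).pair Computable.id), hsat a⟩,
    hP, fun _ _ => Iff.rfl⟩

theorem CeSat.finite_setOf_agree (hE : Equivalence E) (G : Finset ℕ) (W : Set ℕ) :
    {X : CeSat E | ∀ z, (∀ g ∈ G, ¬E z g) → (z ∈ X ↔ z ∈ W)}.Finite := by
  refine Finite.of_finite_image (f := fun X => (G : Set ℕ) ∩ X)
    (G.finite_toSet.finite_subsets.subset ?_) ?_
  · rintro _ ⟨X, -, rfl⟩
    exact inter_subset_left
  · intro X hX Y hY hXY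
    ext z
    by_cases hz : ∀ g ∈ G, ¬E z g
    · rw [hX z hz, hY z hz]
    · push Not at hz
      obtain ⟨g, hgG, hzg⟩ := hz
      have hmem : ∀ V : CeSat E, z ∈ V ↔ g ∈ V := fun V =>
        ⟨V.saturated hzg, V.saturated (hE.symm hzg)⟩
      have hg : g ∈ (G : Set ℕ) ∩ X ↔ g ∈ (G : Set ℕ) ∩ Y := by simp only at hXY; rw [hXY]
      simpa [hmem, hgG] using hg

namespace IsCeer

variable {S : Set ℕ} {P : α × ℕ → Prop}

theorem rePred_saturation (hE : IsCeer E) (hP : REPred P) :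
    REPred fun a : α × ℕ => ∃ x, P (a.1, x) ∧ E x a.2 :=
  rePred_exists <| rePred_and
    (rePred_comp hP ((Computable.fst.comp Computable.fst).pair Computable.snd))
    (rePred_comp hE.rePred (Computable.snd.pair (Computable.snd.comp Computable.fst)))

/-- The `E`-saturation of a c.e. set. -/
def saturation (hE : IsCeer E) (hS : REPred (· ∈ S)) : CeSat E where
  carrier := {y | ∃ x ∈ S, E x y}
  rePred := rePred_comp (hE.rePred_saturation (P := fun a : Unit × ℕ => a.2 ∈ S)
    (rePred_comp hS Computable.snd)) ((Computable.const ()).pair Computable.id)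
  saturated := fun hyz ⟨x, hx, hxy⟩ => ⟨x, hx, hE.equivalence.trans hxy hyz⟩

theorem mem_saturation (hE : IsCeer E) (hS : REPred (· ∈ S)) {y : ℕ} :
    y ∈ hE.saturation hS ↔ ∃ x ∈ S, E x y :=
  Iff.rfl

theorem subset_saturation (hE : IsCeer E) (hS : REPred (· ∈ S)) : S ⊆ hE.saturation hS :=
  fun x hx => ⟨x, hx, hE.equivalence.refl x⟩

theorem saturation_le_iff (hE : IsCeer E) (hS : REPred (· ∈ S)) {X : CeSat E} :
    hE.saturation hS ≤ X ↔ S ⊆ X :=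
  ⟨fun h _ hx => h (hE.subset_saturation hS hx), fun h _ ⟨_, hx, hxy⟩ => X.saturated hxy (h hx)⟩

theorem classOf_eq_classOf (hE : IsCeer E) {x y : ℕ} : classOf E x = classOf E y ↔ E x y := by
  refine ⟨fun h => ?_, fun hxy => ?_⟩
  · have hy : y ∈ classOf E y := hE.equivalence.refl y
    rwa [← h] at hy
  · ext z
    exact ⟨hE.equivalence.trans (hE.equivalence.symm hxy), hE.equivalence.trans hxy⟩

/-- The equivalence class of `x`, as a saturated c.e. set. -/
def cls (hE : IsCeer E) (x : ℕ) : CeSat E where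
  carrier := classOf E x
  rePred := rePred_comp hE.rePred ((Computable.const x).pair Computable.id)
  saturated := fun hyz hxy => hE.equivalence.trans hxy hyz

theorem mem_cls (hE : IsCeer E) {x y : ℕ} : y ∈ hE.cls x ↔ E x y :=
  Iff.rfl

theorem mem_cls_self (hE : IsCeer E) (x : ℕ) : x ∈ hE.cls x :=
  hE.equivalence.refl x

theorem cls_le_iff (hE : IsCeer E) {x : ℕ} {X : CeSat E} : hE.cls x ≤ X ↔ x ∈ X :=
  ⟨fun h => h (hE.mem_cls_self x), fun hx _ hxy => X.saturated hxy hx⟩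

theorem cls_eq_cls (hE : IsCeer E) {x y : ℕ} : hE.cls x = hE.cls y ↔ E x y :=
  SetLike.coe_injective.eq_iff.symm.trans hE.classOf_eq_classOf

theorem uniformlyCe_cls (hE : IsCeer E) : UniformlyCe hE.cls :=
  hE.rePred

/-- The saturation of `{x | x < k}`. -/
def below (hE : IsCeer E) (k : ℕ) : CeSat E :=
  hE.saturation (S := Iio k) (rePred_lt Computable.id (Computable.const k))

theorem mem_below (hE : IsCeer E) {k y : ℕ} : y ∈ hE.below k ↔ ∃ x < k, E x y :=
  Iff.rfl

theorem monotone_below (hE : IsCeer E) : Monotone hE.below := fun _ _ hkl =>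
  (hE.saturation_le_iff _).2 ((Iio_subset_Iio hkl).trans (hE.subset_saturation _))

theorem uniformlyCe_below (hE : IsCeer E) : UniformlyCe hE.below :=
  hE.rePred_saturation (rePred_lt Computable.snd Computable.fst)

end IsCeer

/-- Effective operators: those mapping uniformly c.e. families to uniformly c.e. families. -/
def Effective (Φ : CeSat E → CeSat F) : Prop :=
  ∀ ⦃α : Type⦄ [Primcodable α] (X : α → CeSat E), UniformlyCe X → UniformlyCe fun a => Φ (X a)

namespace Effective

variable {Φ : CeSat E → CeSat F}

theorem not_forall_mem_iff_not_halts (hΦ : Effective Φ) {X : Code → CeSat E} (hX : UniformlyCe X)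
    (x : ℕ) : ¬∀ c, x ∈ Φ (X c) ↔ ¬(c.eval 0).Dom := fun h =>
  ComputablePred.halting_problem_not_re 0 <|
    (rePred_comp (hΦ X hX) (Computable.id.pair (Computable.const x))).of_eq h

theorem monotone (hΦ : Effective Φ) : Monotone Φ := by
  intro X Y hXY x hxX
  by_contra hxY
  obtain ⟨V, hV, mem_V⟩ : ∃ V : Code → CeSat E, UniformlyCe V ∧
      ∀ c y, y ∈ V c ↔ y ∈ X ∨ (c.eval 0).Dom ∧ y ∈ Y := by
    refine exists_uniformlyCe_mem_iff (rePred_or (rePred_comp X.rePred Computable.snd) <|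
      rePred_and (rePred_comp (ComputablePred.halting_problem_re 0) Computable.fst)
        (rePred_comp Y.rePred Computable.snd)) fun c {y z} hyz => ?_
    exact Or.imp (X.saturated hyz) (And.imp_right (Y.saturated hyz))
  refine hΦ.not_forall_mem_iff_not_halts hV x fun c => ?_
  by_cases hc : (c.eval 0).Dom
  · have : V c = Y := CeSat.ext fun z => by simpa [mem_V, hc] using @hXY z
    simp [this, hc, hxY]
  · have : V c = X := CeSat.ext fun z => by simp [mem_V, hc]
    simp [this, hc, hxX]

theorem exists_mem_of_forall_exists_mem (hΦ : Effective Φ) {Z : ℕ → CeSat E} (hZ : UniformlyCe Z)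
    (hmono : Monotone Z) {Y : CeSat E} (hY : ∀ y ∈ Y, ∃ k, y ∈ Z k) {x : ℕ} (hx : x ∈ Φ Y) :
    ∃ k, x ∈ Φ (Z k) := by
  by_contra! hxZ
  obtain ⟨V, hV, mem_V⟩ : ∃ V : Code → CeSat E, UniformlyCe V ∧
      ∀ c y, y ∈ V c ↔ ∃ k, c.evaln k 0 = none ∧ y ∈ Z k := by
    have hevaln : Computable fun a : (Code × ℕ) × ℕ => a.1.1.evaln a.2 0 :=
      Code.primrec_evaln.to_comp.comp ((Computable.snd.pair
        (Computable.fst.comp Computable.fst)).pair (Computable.const 0))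
    exact exists_uniformlyCe_mem_iff
      (rePred_exists <| rePred_and (rePred_eq hevaln (Computable.const none))
        (rePred_comp hZ (Computable.snd.pair (Computable.snd.comp Computable.fst))))
      fun c {y z} hyz ⟨k, hk, hy⟩ => ⟨k, hk, (Z k).saturated hyz hy⟩
  refine hΦ.not_forall_mem_iff_not_halts hV x fun c => ?_
  constructor
  · intro hxV hc
    obtain ⟨v, hv⟩ := Part.dom_iff_mem.1 hc
    obtain ⟨N, hN⟩ := Code.evaln_complete.1 hv
    have hVZ : V c ≤ Z N := fun y hy => by
      obtain ⟨k, hk, hyk⟩ := (mem_V c y).1 hy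
      have hkN : k ≤ N := by
        by_contra! hNk
        simpa [hk] using Code.evaln_mono hNk.le hN
      exact hmono hkN hyk
    exact hxZ N (hΦ.monotone hVZ hxV)
  · intro hc
    have hYV : Y ≤ V c := fun y hy => by
      obtain ⟨k, hk⟩ := hY y hy
      refine (mem_V c y).2 ⟨k, Option.eq_none_iff_forall_not_mem.2 fun v hv => hc ?_, hk⟩
      exact Part.dom_iff_mem.2 ⟨v, Code.evaln_sound hv⟩
    exact hΦ.monotone hYV hx

theorem exists_forall_mem_of_forall_exists_mem (hΦ : Effective Φ) {Z : ℕ → CeSat E}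
    (hZ : UniformlyCe Z) (hmono : Monotone Z) {Y : CeSat E} (hY : ∀ y ∈ Y, ∃ k, y ∈ Z k)
    (G : Finset ℕ) : ∃ k, ∀ g ∈ G, g ∈ Φ Y → g ∈ Φ (Z k) := by
  have hevent : ∀ g ∈ G, ∀ᶠ k in atTop, g ∈ Φ Y → g ∈ Φ (Z k) := fun g _ => by
    by_cases hg : g ∈ Φ Y
    · obtain ⟨k, hk⟩ := hΦ.exists_mem_of_forall_exists_mem hZ hmono hY hg
      filter_upwards [eventually_ge_atTop k] with l hkl _
      exact hΦ.monotone (hmono hkl) hk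
    · simp [hg]
  exact (G.eventually_all.2 hevent).exists

theorem exists_forall_apply_le_of_below_le (hΦ : Effective Φ) (hE : IsCeer E) (hF : Equivalence F)
    (Y : CeSat E) (G : Finset ℕ) :
    ∃ k, ∀ X, hE.below k ≤ X → (∀ z, (∀ g ∈ G, ¬F z g) → z ∈ Φ X) → Φ Y ≤ Φ X := by
  obtain ⟨k, hk⟩ := hΦ.exists_forall_mem_of_forall_exists_mem hE.uniformlyCe_below
    hE.monotone_below (Y := Y) (fun y _ => ⟨y + 1, y, y.lt_succ_self, hE.equivalence.refl y⟩) G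
  refine ⟨k, fun X hX hmem z hzY => ?_⟩
  by_cases hz : ∀ g ∈ G, ¬F z g
  · exact hmem z hz
  · push Not at hz
    obtain ⟨g, hgG, hzg⟩ := hz
    have hgX : g ∈ Φ X := hΦ.monotone hX (hk g hgG ((Φ Y).saturated hzg hzY))
    exact (Φ X).saturated (hF.symm hzg) hgX

end Effective

namespace IsCeer

/-- The `E`-saturation of `ran φ_e`. -/
def satRange (hE : IsCeer E) (e : ℕ) : CeSat E :=
  hE.saturation (S := (phi e).ran)
    (rePred_comp rePred_mem_ran_phi ((Computable.const e).pair Computable.id))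

theorem mem_satRange (hE : IsCeer E) {e y : ℕ} :
    y ∈ hE.satRange e ↔ classOf E y ∈ classOf E '' (phi e).ran := by
  simp only [mem_image, hE.classOf_eq_classOf]
  rfl

theorem fsJump_iff (hE : IsCeer E) {m n : ℕ} :
    FSJump E m n ↔ hE.satRange m = hE.satRange n := by
  refine ⟨fun h => CeSat.ext fun y => by rw [mem_satRange, mem_satRange, h], fun h => ?_⟩
  have hsub : ∀ {m n}, hE.satRange m = hE.satRange n →
      classOf E '' (phi m).ran ⊆ classOf E '' (phi n).ran := by
    rintro m n h _ ⟨x, hx, rfl⟩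
    exact hE.mem_satRange.1 (h ▸ hE.subset_saturation _ hx)
  exact (hsub h).antisymm (hsub h.symm)

theorem exists_computable_satRange_eq (hE : IsCeer E) {X : α → CeSat E} (hX : UniformlyCe X) :
    ∃ g : α → ℕ, Computable g ∧ ∀ a, hE.satRange (g a) = X a := by
  obtain ⟨g, hg, hran⟩ := exists_computable_ran_phi_eq hX
  refine ⟨g, hg, fun a => le_antisymm ?_ ?_⟩
  · exact (hE.saturation_le_iff _).2 (hran a).subset
  · exact (hran a).superset.trans (hE.subset_saturation _)

theorem satRange_surjective (hE : IsCeer E) : Function.Surjective hE.satRange := fun X => by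
  obtain ⟨g, -, hg⟩ := hE.exists_computable_satRange_eq (X := fun _ : Unit => X)
    (rePred_comp X.rePred Computable.snd)
  exact ⟨g (), hg ()⟩

theorem exists_effective_of_fsJump (hE : IsCeer E) (hF : IsCeer F) {f : ℕ → ℕ}
    (hf : Computable f) (hhom : ∀ m n, FSJump E m n → FSJump F (f m) (f n)) :
    ∃ Φ : CeSat E → CeSat F, Effective Φ ∧ ∀ e, Φ (hE.satRange e) = hF.satRange (f e) := by
  choose index hindex using hE.satRange_surjective
  have hΦ : ∀ e, hF.satRange (f (index (hE.satRange e))) = hF.satRange (f e) := fun e =>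
    hF.fsJump_iff.1 (hhom _ _ (hE.fsJump_iff.2 (hindex _)))
  refine ⟨fun X => hF.satRange (f (index X)), fun α _ X hX => ?_, hΦ⟩
  obtain ⟨g, hg, hgX⟩ := hE.exists_computable_satRange_eq hX
  have hce : REPred fun a : α × ℕ => a.2 ∈ hF.satRange (f (g a.1)) :=
    hF.rePred_saturation
      (rePred_comp rePred_mem_ran_phi ((hf.comp (hg.comp Computable.fst)).pair Computable.snd))
  exact hce.of_eq fun a => by rw [← hΦ (g a.1), hgX]

end IsCeer

end CeSat

section Maximal

variable {A : Set ℕ} {p : ℕ → ℕ}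

theorem EA_iff_eq_of_notMem {x y : ℕ} (hy : y ∉ A) : EA A x y ↔ x = y := by
  simp [EA, hy]

theorem equivalence_EA (A : Set ℕ) : Equivalence (EA A) where
  refl _ := .inl rfl
  symm := Or.imp Eq.symm And.symm
  trans := by
    rintro x y z (rfl | ⟨hx, hy⟩) (rfl | ⟨hy', hz⟩)
    exacts [.inl rfl, .inr ⟨hy', hz⟩, .inr ⟨hx, hy⟩, .inr ⟨hx, hz⟩]

theorem isCeer_EA (hA : REPred (· ∈ A)) : IsCeer (EA A) where
  equivalence := equivalence_EA A
  rePred := rePred_or (rePred_eq Computable.fst Computable.snd)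
    (rePred_and (rePred_comp hA Computable.fst) (rePred_comp hA Computable.snd))

theorem exists_finset_forall_not_EA (A : Set ℕ) (N : ℕ) :
    ∃ G : Finset ℕ, ∀ z, (∀ g ∈ G, ¬EA A z g) → N ≤ z ∧ z ∉ A := by
  have hle {G : Finset ℕ} (hG : Finset.range N ⊆ G) {z : ℕ} (hz : ∀ g ∈ G, ¬EA A z g) : N ≤ z := by
    by_contra! hzN
    exact hz z (hG (Finset.mem_range.2 hzN)) (.inl rfl)
  rcases A.eq_empty_or_nonempty with rfl | ⟨a, ha⟩
  · exact ⟨Finset.range N, fun z hz => ⟨hle subset_rfl hz, notMem_empty z⟩⟩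
  · refine ⟨insert a (Finset.range N), fun z hz => ⟨hle (Finset.subset_insert _ _) hz, ?_⟩⟩
    exact fun hzA => hz a (Finset.mem_insert_self _ _) (.inr ⟨hzA, ha⟩)

theorem CeSat.finite_setOf_agree_EA (A : Set ℕ) (N : ℕ) (W : Set ℕ) :
    {X : CeSat (EA A) | ∀ z ≥ N, z ∉ A → (z ∈ X ↔ z ∈ W)}.Finite := by
  obtain ⟨G, hG⟩ := exists_finset_forall_not_EA A N
  exact (CeSat.finite_setOf_agree (equivalence_EA A) G W).subset fun X hX z hz =>
    hX z (hG z hz).1 (hG z hz).2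

namespace MaximalSet

variable {Φ : CeSat (EA A) → CeSat (EA A)}

theorem isCeer_EA (hA : MaximalSet A) : IsCeer (EA A) :=
  _root_.isCeer_EA hA.rePred

theorem eventually_notMem_apply (hA : MaximalSet A) (hΦ : Effective Φ)
    (hinj : Function.Injective Φ) {X : CeSat (EA A)} (hX : ∃ᶠ z in atTopOff A, z ∉ X) :
    ∀ᶠ z in atTopOff A, z ∉ Φ X := by
  -- Otherwise the images of the infinitely many sets `X ∪ [x]` all contain almost every `z ∉ A`,
  -- and only finitely many saturated sets do so from a given bound on.
  refine (hA.eventually_or_eventually_not (Φ X).rePred).resolve_left fun hmem => ?_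
  obtain ⟨N, hN⟩ := eventually_atTopOff.1 hmem
  have hinsert (x : ℕ) : REPred (· ∈ insert x (X : Set ℕ)) :=
    rePred_or (rePred_eq Computable.id (Computable.const x)) X.rePred
  let V (x : ℕ) : CeSat (EA A) := hA.isCeer_EA.saturation (hinsert x)
  have hXV (x : ℕ) : X ≤ V x := (subset_insert _ _).trans (hA.isCeer_EA.subset_saturation _)
  have hmaps : MapsTo (fun x => Φ (V x)) {x | x ∉ A ∧ x ∉ X}
      {Y | ∀ z ≥ N, z ∉ A → (z ∈ Y ↔ z ∈ univ)} := fun x _ z hzN hzA =>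
    iff_of_true (hΦ.monotone (hXV x) (hN z hzN hzA)) (mem_univ z)
  have hinjOn : InjOn (fun x => Φ (V x)) {x | x ∉ A ∧ x ∉ X} := by
    rintro x ⟨hxA, hxX⟩ y - hxy
    have hx : x ∈ V y := hinj hxy ▸ hA.isCeer_EA.subset_saturation _ (mem_insert _ _)
    simpa [V, IsCeer.mem_saturation, EA_iff_eq_of_notMem hxA, hxX] using hx
  have hfin := (CeSat.finite_setOf_agree_EA A N univ).of_injOn hmaps hinjOn
  exact hX (eventually_atTopOff_iff_finite.2 (by simpa only [not_not] using hfin))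

theorem eventually_notMem_apply_cls (hA : MaximalSet A) (hΦ : Effective Φ)
    (hinj : Function.Injective Φ) (x : ℕ) : ∀ᶠ z in atTopOff A, z ∉ Φ (hA.isCeer_EA.cls x) := by
  have := hA.atTopOff_neBot
  refine hA.eventually_notMem_apply hΦ hinj (Eventually.frequently ?_)
  filter_upwards [eventually_atTopOff_notMem, eventually_atTopOff_ne x] with z hzA hzx
  rw [IsCeer.mem_cls, EA_iff_eq_of_notMem hzA]
  exact hzx.symm

theorem tendsto_of_eventually_mem_apply_cls (hA : MaximalSet A) (hΦ : Effective Φ)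
    (hinj : Function.Injective Φ) (hp : ∀ᶠ y in atTopOff A, y ∈ Φ (hA.isCeer_EA.cls (p y))) :
    Tendsto p (atTopOff A) (atTopOff A) := by
  have hne (x : ℕ) : ∀ᶠ y in atTopOff A, ¬EA A (p y) x := by
    filter_upwards [hp, hA.eventually_notMem_apply_cls hΦ hinj x] with y hy hyx hpx
    exact hyx (hA.isCeer_EA.cls_eq_cls.2 hpx ▸ hy)
  refine tendsto_inf.2 ⟨?_, tendsto_principal.2 ?_⟩
  · rw [← Nat.cofinite_eq_atTop]
    exact le_cofinite_iff_eventually_ne.2 fun x => (hne x).mono fun y hy hyx => hy (.inl hyx)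
  · rcases A.eq_empty_or_nonempty with rfl | ⟨a, ha⟩
    · simp
    · exact (hne a).mono fun y hy hpA => hy (.inr ⟨hpA, ha⟩)

theorem eventually_eq_of_mem_apply_cls (hA : MaximalSet A) (hΦ : Effective Φ)
    (hinj : Function.Injective Φ) :
    ∀ᶠ y in atTopOff A, ∀ x, y ∈ Φ (hA.isCeer_EA.cls x) → x = y := by
  have hT : REPred fun a : ℕ × ℕ => a.1 ∈ Φ (hA.isCeer_EA.cls a.2) ∧ a.2 ≠ a.1 :=
    rePred_and
      (rePred_comp (hΦ _ hA.isCeer_EA.uniformlyCe_cls) (Computable.snd.pair Computable.fst))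
      (rePred_ne Computable.snd Computable.fst)
  rcases hA.eventually_or_eventually_not (rePred_exists hT) with hev | hev
  · obtain ⟨p, hp, hpT⟩ := hA.exists_computable_eventually hT hev
    have htendsto := hA.tendsto_of_eventually_mem_apply_cls hΦ hinj (hpT.mono fun y hy => hy.1)
    have := hA.atTopOff_neBot
    obtain ⟨y, hpy, -, hne⟩ := ((hA.eventually_apply_eq_self hp htendsto).and hpT).exists
    exact absurd hpy hne
  · filter_upwards [hev] with y hy x hyx
    by_contra hxy
    exact hy ⟨x, hyx, hxy⟩

theorem eventually_mem_apply_of_mem (hA : MaximalSet A) (hΦ : Effective Φ)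
    (hinj : Function.Injective Φ) : ∀ᶠ z in atTopOff A, ∀ X, z ∈ X → z ∈ Φ X := by
  suffices h : ∀ᶠ z in atTopOff A, z ∈ Φ (hA.isCeer_EA.cls z) from h.mono fun z hz X hzX =>
    hΦ.monotone (hA.isCeer_EA.cls_le_iff.2 hzX) hz
  obtain ⟨N, hN⟩ := eventually_atTopOff.1 (hA.eventually_eq_of_mem_apply_cls hΦ hinj)
  refine eventually_atTopOff_iff_finite.2 <| (CeSat.finite_setOf_agree_EA A N ∅).of_injOn
    (f := fun x => Φ (hA.isCeer_EA.cls x)) ?_ ?_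
  · rintro x ⟨-, hx⟩ z hzN hzA
    refine iff_of_false (fun hz => hx ?_) (notMem_empty z)
    have hxz := hN z hzN hzA x hz
    rwa [← hxz] at hz
  · rintro x - y ⟨hyA, -⟩ hxy
    exact (EA_iff_eq_of_notMem hyA).1 (hA.isCeer_EA.cls_eq_cls.1 (hinj hxy))

theorem eventually_mem_of_mem_apply (hA : MaximalSet A) (hΦ : Effective Φ)
    (hinj : Function.Injective Φ) : ∀ᶠ c in atTopOff A, ∀ X, c ∈ Φ X → c ∈ X := by
  obtain ⟨N, hN⟩ := eventually_atTopOff.1 (hA.eventually_mem_apply_of_mem hΦ hinj)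
  have hcompl (c : ℕ) : REPred (· ∈ ({c}ᶜ : Set ℕ)) :=
    rePred_ne Computable.id (Computable.const c)
  obtain ⟨G, hG⟩ := exists_finset_forall_not_EA A N
  obtain ⟨k, hk⟩ := hΦ.exists_forall_apply_le_of_below_le hA.isCeer_EA (equivalence_EA A) ⊤ G
  refine eventually_atTopOff.2 ⟨k, fun c hck hcA X hcX => ?_⟩
  -- If `c ∉ X`, then `Φ` identifies `{c}ᶜ`, a saturated set containing `X`, with `ℕ`.
  by_contra hcnX
  let C : CeSat (EA A) := hA.isCeer_EA.saturation (hcompl c)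
  have hcC : c ∉ C := by simp [C, IsCeer.mem_saturation, EA_iff_eq_of_notMem hcA]
  have hsubC (Y : CeSat (EA A)) (hcY : c ∉ Y) : Y ≤ C :=
    (subset_compl_singleton_iff.2 hcY).trans (hA.isCeer_EA.subset_saturation _)
  have hbelow : c ∉ hA.isCeer_EA.below k := by
    simpa [IsCeer.mem_below, EA_iff_eq_of_notMem hcA] using hck
  have htop : Φ ⊤ ≤ Φ C := hk C (hsubC _ hbelow) fun z hz => by
    obtain ⟨hzN, hzA⟩ := hG z hz
    rcases eq_or_ne z c with rfl | hzc
    · exact hΦ.monotone (hsubC X hcnX) hcX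
    · exact hN z hzN hzA C (hA.isCeer_EA.subset_saturation _ hzc)
  have hC : ⊤ = C := hinj (htop.antisymm (hΦ.monotone le_top))
  exact hcC (hC ▸ mem_univ c)

theorem surjective_of_effective_of_injective (hA : MaximalSet A) (hΦ : Effective Φ)
    (hinj : Function.Injective Φ) : Function.Surjective Φ := by
  intro Y
  obtain ⟨N, hN⟩ := eventually_atTopOff.1 <| (hA.eventually_mem_apply_of_mem hΦ hinj).and
    (hA.eventually_mem_of_mem_apply hΦ hinj)
  have hmaps : MapsTo Φ {X | ∀ z ≥ N, z ∉ A → (z ∈ X ↔ z ∈ (Y : Set ℕ))}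
      {X | ∀ z ≥ N, z ∉ A → (z ∈ X ↔ z ∈ (Y : Set ℕ))} := fun X hX z hzN hzA => by
    obtain ⟨hΦ_of_mem, hmem_of_Φ⟩ := hN z hzN hzA
    rw [← hX z hzN hzA]
    exact ⟨hmem_of_Φ X, hΦ_of_mem X⟩
  have hbij := ((CeSat.finite_setOf_agree_EA A N Y).injOn_iff_bijOn_of_mapsTo hmaps).1 hinj.injOn
  obtain ⟨X, -, hXY⟩ := hbij.surjOn fun z _ _ => Iff.rfl
  exact ⟨X, hXY⟩

end MaximalSet

end Maximal

/-- If `A` is maximal then `(E_A)⁺` is self-full: every computable reduction of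
`(E_A)⁺` to itself has range meeting every `(E_A)⁺`-class. -/
theorem jump_EA_selfFull_of_maximal (A : Set ℕ) (hA : MaximalSet A)
    (f : ℕ → ℕ) (hf : Computable f)
    (hred : ∀ m n, FSJump (EA A) m n ↔ FSJump (EA A) (f m) (f n)) :
    ∀ e, ∃ e', FSJump (EA A) (f e') e := by
  intro e
  have hE := hA.isCeer_EA
  obtain ⟨Φ, hΦ, hΦf⟩ := hE.exists_effective_of_fsJump hE hf fun m n => (hred m n).1
  have hinj : Function.Injective Φ := hE.satRange_surjective.forall₂.2 fun m n h => by
    rwa [hΦf, hΦf, ← hE.fsJump_iff, ← hred, hE.fsJump_iff] at h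
  obtain ⟨X, hX⟩ := hA.surjective_of_effective_of_injective hΦ hinj (hE.satRange e)
  obtain ⟨e', rfl⟩ := hE.satRange_surjective X
  exact ⟨e', hE.fsJump_iff.2 ((hΦf e').symm.trans hX)⟩
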